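/- If (X^n)_{n≥0} is a sequence of bounded progressively measurable processes converging increasingly (pointwise in (t,ω)) to a bounded progressively measurable process X, then the strong envelopes SE(X^n) converge increasingly to SE(X): for every t ≥ 0, SE(X^n)_t ↑ SE(X)_t, dt⊗dP-almost everywhere. -/

import Mathlib

/-!
The envelopes `Un n` increase almost everywhere and are dominated by `U`, by minimality of each
`Un n`. What must be shown is that `sup_n Un n` is no smaller than `U`, and for this it suffices to
find a nonnegative right-continuous supermartingale `W` which dominates `X` and equals
`sup_n min (C, Un n)` almost everywhere, where `C` bounds `X`; minimality of `U` then gives `U ≤ W`.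

Truncated running maxima (`truncMax`) replace `min (C, Un n)` by a sequence `Z n` that increases
surely (`increasingSystem_truncMax`). The supermartingale property passes to `V = sup_n Z n` by
dominated convergence; the point is the right-continuity of its paths. As a supremum of
right-continuous functions, `V` is lower semicontinuous from the right. At a bounded optional time
`S`, it is also upper semicontinuous from the right, almost surely: otherwise `Z n`, sampled when it
first exceeds a level `b > V_S` shortly after `S`, would have a larger expectation than `V_S`,
against optional sampling (`IncreasingSystem.ae_eventually_le`).

To pass from one optional time to all times, fix `ε > 0` and a horizon `K`, and consider the
optional times `S ≤ K` before which `V` has no upward right-oscillation larger than `ε`. A time of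
maximal expectation among these must equal `K` almost surely, since it could otherwise be extended
by the time `V` takes to leave an interval of length `ε` (`IncreasingSystem.exists_admissible`).
The filtration is neither complete nor right-continuous here, so that the exceptional null
event cannot simply be discarded: `W` is `V` frozen at the first time at which, for some
`ε = 1 / (k + 1)` and some integer `K`, the optional time found above falls short of its horizon.
This keeps `W` adapted and makes every path right-continuous (`IncreasingSystem.exists_version`).
-/

open MeasureTheory Filter Set

/-- A real-valued process is right-continuous if each of its paths is. -/
def RightCont {Ω : Type*} (U : ℝ → Ω → ℝ) : Prop :=
  ∀ ω t, ContinuousWithinAt (fun s => U s ω) (Set.Ici t) t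

/-- `U` is the strong envelope of `X`: the smallest nonnegative right-continuous
supermartingale dominating `X` for `dt⊗dP`-almost every `(t, ω)` with `t ≥ 0`. -/
def IsStrongEnvelope {Ω : Type*} {m0 : MeasurableSpace Ω} (ℱ : Filtration ℝ m0)
    (μ : Measure Ω) (X U : ℝ → Ω → ℝ) : Prop :=
  Supermartingale U ℱ μ ∧ RightCont U ∧ (∀ t, ∀ᵐ ω ∂μ, 0 ≤ U t ω) ∧
    (∀ᵐ p ∂((volume.restrict (Set.Ici (0:ℝ))).prod μ), X p.1 p.2 ≤ U p.1 p.2) ∧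
    ∀ V : ℝ → Ω → ℝ, Supermartingale V ℱ μ → RightCont V → (∀ t, ∀ᵐ ω ∂μ, 0 ≤ V t ω) →
      (∀ᵐ p ∂((volume.restrict (Set.Ici (0:ℝ))).prod μ), X p.1 p.2 ≤ V p.1 p.2) →
      (∀ᵐ p ∂((volume.restrict (Set.Ici (0:ℝ))).prod μ), U p.1 p.2 ≤ V p.1 p.2)

open scoped Topology ENNReal

/-! ### Right-continuous paths and joint measurability -/

theorem RightCont.tendsto_seq {Ω : Type*} {Y : ℝ → Ω → ℝ} (hY : RightCont Y) (ω : Ω) {x : ℝ}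
    {u : ℕ → ℝ} (h1 : ∀ j, x ≤ u j) (h2 : ∀ j : ℕ, u j ≤ x + 1 / ((j : ℝ) + 1)) :
    Tendsto (fun j => Y (u j) ω) atTop (𝓝 (Y x ω)) := by
  refine (hY ω x).tendsto.comp (tendsto_nhdsWithin_iff.2 ⟨?_, Eventually.of_forall h1⟩)
  refine tendsto_of_tendsto_of_tendsto_of_le_of_le tendsto_const_nhds ?_ h1 h2
  simpa using tendsto_one_div_add_atTop_nhds_zero_nat.const_add x

theorem RightCont.measurable_uncurry {Ω : Type*} {m : MeasurableSpace Ω} {Y : ℝ → Ω → ℝ}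
    (hY : RightCont Y) (hm : ∀ t, Measurable (Y t)) :
    Measurable (fun p : ℝ × Ω => Y p.1 p.2) := by
  refine measurable_of_tendsto_metrizable
    (f := fun (j : ℕ) (p : ℝ × Ω) =>
      Y (((⌊((j : ℝ) + 1) * p.1⌋ : ℝ) + 1) / ((j : ℝ) + 1)) p.2) (fun j => ?_) ?_
  · have h1 : Measurable (fun q : ℤ × Ω => Y (((q.1 : ℝ) + 1) / ((j : ℝ) + 1)) q.2) :=
      measurable_from_prod_countable_right fun y => hm (((y : ℝ) + 1) / ((j : ℝ) + 1))
    have h2 : Measurable (fun p : ℝ × Ω => ((⌊((j : ℝ) + 1) * p.1⌋, p.2) : ℤ × Ω)) :=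
      (Int.measurable_floor.comp (measurable_fst.const_mul _)).prodMk measurable_snd
    exact h1.comp h2
  · refine tendsto_pi_nhds.2 fun p => hY.tendsto_seq p.2 (fun j => ?_) fun j => ?_
    · have hj : (0 : ℝ) < (j : ℝ) + 1 := by positivity
      rw [le_div_iff₀ hj]
      have := Int.lt_floor_add_one (((j : ℝ) + 1) * p.1)
      nlinarith
    · have hj : (0 : ℝ) < (j : ℝ) + 1 := by positivity
      have h1 : (p.1 + 1 / ((j : ℝ) + 1)) * ((j : ℝ) + 1) = ((j : ℝ) + 1) * p.1 + 1 := by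
        field_simp
      rw [div_le_iff₀ hj, h1]
      have := Int.floor_le (((j : ℝ) + 1) * p.1)
      nlinarith

/-- Right-continuous adapted processes are progressively measurable: sampling at an
`ℱ t`-measurable time that is at most `t` gives an `ℱ t`-measurable variable. -/
theorem RightCont.measurable_sample {Ω : Type*} {m : MeasurableSpace Ω} {Y : ℝ → Ω → ℝ}
    (hY : RightCont Y) (t : ℝ) (hm : ∀ r ≤ t, Measurable (Y r)) {S : Ω → ℝ} (hS : Measurable S) :
    Measurable (fun ω => Y (min (S ω) t) ω) := by
  have h1 : RightCont (fun x => Y (min x t)) := by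
    intro ω x
    refine (hY ω (min x t)).comp (f := fun x => min x t) (s := Set.Ici x)
      (by fun_prop) ?_
    intro y hy
    exact min_le_min_right t hy
  have h2 := RightCont.measurable_uncurry h1 (fun r => hm _ (min_le_right r t))
  exact h2.comp (hS.prodMk measurable_id)

/-! ### Optional times -/

/-- Optional times of the filtration (stopping times of its right-continuous version). -/
def IsOptional {Ω : Type*} {m0 : MeasurableSpace Ω} (ℱ : Filtration ℝ m0) (S : Ω → ℝ) : Prop :=
  ∀ t, MeasurableSet[ℱ t] {ω | S ω < t}

section Optional

variable {Ω : Type*} {m0 : MeasurableSpace Ω} {ℱ : Filtration ℝ m0}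

theorem IsOptional.measurable {S : Ω → ℝ} (hS : IsOptional ℱ S) : Measurable S :=
  measurable_of_Iio fun t => ℱ.le t _ (hS t)

theorem isOptional_const (c : ℝ) : IsOptional ℱ (fun _ => c) := fun t => by
  by_cases h : c < t <;> simp [h]

theorem IsOptional.min {S T : Ω → ℝ} (hS : IsOptional ℱ S) (hT : IsOptional ℱ T) :
    IsOptional ℱ (fun ω => min (S ω) (T ω)) := fun t => by
  have : {ω | Min.min (S ω) (T ω) < t} = {ω | S ω < t} ∪ {ω | T ω < t} := by
    ext ω; simp
  rw [this]
  exact (hS t).union (hT t)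

theorem IsOptional.add_const {S : Ω → ℝ} (hS : IsOptional ℱ S) {h : ℝ} (hh : 0 ≤ h) :
    IsOptional ℱ (fun ω => S ω + h) := fun t => by
  have : {ω | S ω + h < t} = {ω | S ω < t - h} := by
    ext ω; simp [lt_sub_iff_add_lt]
  rw [this]
  exact ℱ.mono (by linarith) _ (hS (t - h))

theorem IsOptional.iSup {S : ℕ → Ω → ℝ} (hS : ∀ n, IsOptional ℱ (S n)) {K : ℝ}
    (hK : ∀ n ω, S n ω ≤ K) : IsOptional ℱ (fun ω => ⨆ n, S n ω) := fun t => by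
  have : {ω | ⨆ n, S n ω < t} = ⋃ q : {q : ℚ // (q : ℝ) < t}, ⋂ n, {ω | S n ω < q} := by
    ext ω
    have hb : BddAbove (Set.range fun n => S n ω) := ⟨K, by rintro _ ⟨n, rfl⟩; exact hK n ω⟩
    simp only [mem_ofPred_eq, mem_iUnion, mem_iInter]
    constructor
    · intro h
      obtain ⟨q, h1, h2⟩ := exists_rat_btwn h
      exact ⟨⟨q, h2⟩, fun n => (le_ciSup hb n).trans_lt h1⟩
    · rintro ⟨q, h⟩
      exact (ciSup_le fun n => (h n).le).trans_lt q.2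
  rw [this]
  exact MeasurableSet.iUnion fun q => MeasurableSet.iInter fun n => ℱ.mono q.2.le _ (hS n _)

/-- First time after `S` at which `A` holds, capped at the horizon `K`. -/
noncomputable def hit (S : Ω → ℝ) (A : ℝ → Ω → Prop) (K : ℝ) (ω : Ω) : ℝ :=
  sInf (insert K {t | S ω < t ∧ A t ω})

theorem hit_bddBelow (S : Ω → ℝ) (A : ℝ → Ω → Prop) (K : ℝ) (ω : Ω) :
    BddBelow (insert K {t | S ω < t ∧ A t ω}) :=
  BddBelow.insert K ⟨S ω, fun _ ht => ht.1.le⟩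

theorem hit_le (S : Ω → ℝ) (A : ℝ → Ω → Prop) (K : ℝ) (ω : Ω) : hit S A K ω ≤ K :=
  csInf_le (hit_bddBelow S A K ω) (mem_insert _ _)

theorem le_hit {S : Ω → ℝ} {A : ℝ → Ω → Prop} {K : ℝ} {ω : Ω} {c : ℝ} (hc : c ≤ K)
    (h : ∀ t, S ω < t → A t ω → c ≤ t) : c ≤ hit S A K ω := by
  refine le_csInf (insert_nonempty _ _) ?_
  rintro t (rfl | ht)
  · exact hc
  · exact h t ht.1 ht.2

theorem hit_le_of_mem {S : Ω → ℝ} {A : ℝ → Ω → Prop} {K : ℝ} {ω : Ω} {t : ℝ} (h1 : S ω < t)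
    (h2 : A t ω) : hit S A K ω ≤ t :=
  csInf_le (hit_bddBelow S A K ω) (mem_insert_of_mem _ ⟨h1, h2⟩)

theorem hit_lt_iff {S : Ω → ℝ} {A : ℝ → Ω → Prop} {K : ℝ} {ω : Ω} {c : ℝ} :
    hit S A K ω < c ↔ K < c ∨ ∃ t, S ω < t ∧ A t ω ∧ t < c := by
  rw [hit, csInf_lt_iff (hit_bddBelow S A K ω) (insert_nonempty _ _)]
  simp [and_assoc]

/-- Hitting times of right-open adapted sets are optional: rational times detect them. -/
theorem isOptional_hit {S : Ω → ℝ} (hS : IsOptional ℱ S) {A : ℝ → Ω → Prop} (K : ℝ)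
    (hA : ∀ t, MeasurableSet[ℱ t] {ω | A t ω})
    (hopen : ∀ t ω, A t ω → ∀ᶠ r in 𝓝[>] t, A r ω) : IsOptional ℱ (hit S A K) := fun t => by
  by_cases hK : K < t
  · have : {ω | hit S A K ω < t} = univ := by
      ext ω; simp [hit_lt_iff, hK]
    rw [this]; exact MeasurableSet.univ
  · have : {ω | hit S A K ω < t} =
        ⋃ q : {q : ℚ // (q : ℝ) < t}, ({ω | S ω < q} ∩ {ω | A q ω}) := by
      ext ω
      simp only [mem_ofPred_eq, hit_lt_iff, hK, false_or, mem_iUnion, mem_inter_iff]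
      constructor
      · rintro ⟨x, h1, h2, h3⟩
        have h4 := (hopen x ω h2).and (Ioo_mem_nhdsGT h3)
        obtain ⟨u, hu, hu2⟩ := mem_nhdsGT_iff_exists_Ioo_subset.1 h4
        obtain ⟨q, hq1, hq2⟩ := exists_rat_btwn (mem_Ioi.1 hu)
        have h5 := hu2 ⟨hq1, hq2⟩
        exact ⟨⟨q, h5.2.2⟩, h1.trans hq1, h5.1⟩
      · rintro ⟨q, h1, h2⟩
        exact ⟨q, h1, h2, q.2⟩
    rw [this]
    exact MeasurableSet.iUnion fun q => ℱ.mono q.2.le _ ((hS _).inter (hA _))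

end Optional


/-! ### Optional sampling -/

section Sampling

variable {Ω : Type*} {m0 : MeasurableSpace Ω} {μ : Measure Ω} {ℱ : Filtration ℝ m0}

/-- Discretisation from the right: the first point of `(1/(j+1))ℕ` after `x ≥ 0`. -/
noncomputable def gridIdx (j : ℕ) (x : ℝ) : ℕ := ⌊((j : ℝ) + 1) * x⌋₊ + 1

theorem gridIdx_le_iff {j : ℕ} {x : ℝ} (hx : 0 ≤ x) (k : ℕ) :
    gridIdx j x ≤ k ↔ x < (k : ℝ) / ((j : ℝ) + 1) := by
  have hj : (0 : ℝ) < (j : ℝ) + 1 := by positivity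
  rw [gridIdx, Nat.add_one_le_iff, Nat.floor_lt (by positivity), lt_div_iff₀ hj, mul_comm]

theorem gridIdx_mono (j : ℕ) {x y : ℝ} (h : x ≤ y) : gridIdx j x ≤ gridIdx j y := by
  unfold gridIdx
  gcongr

theorem le_grid {j : ℕ} {x : ℝ} (hx : 0 ≤ x) : x ≤ (gridIdx j x : ℝ) / ((j : ℝ) + 1) :=
  ((gridIdx_le_iff hx _).1 le_rfl).le

theorem grid_le {j : ℕ} {x : ℝ} (hx : 0 ≤ x) :
    (gridIdx j x : ℝ) / ((j : ℝ) + 1) ≤ x + 1 / ((j : ℝ) + 1) := by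
  have hj : (0 : ℝ) < (j : ℝ) + 1 := by positivity
  have h1 : (x + 1 / ((j : ℝ) + 1)) * ((j : ℝ) + 1) = ((j : ℝ) + 1) * x + 1 := by
    field_simp
  rw [div_le_iff₀ hj, h1, gridIdx]
  push_cast
  have := Nat.floor_le (a := ((j : ℝ) + 1) * x) (by positivity)
  linarith

/-- The filtration observed along the grid `(1/(j+1))ℕ`. -/
noncomputable def gridFiltration (ℱ : Filtration ℝ m0) (j : ℕ) : Filtration ℕ m0 where
  seq k := ℱ ((k : ℝ) / ((j : ℝ) + 1))
  mono' k l h := ℱ.mono (by gcongr)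
  le' k := ℱ.le _

theorem isStoppingTime_grid {S : Ω → ℝ} (hS : IsOptional ℱ S) (h0 : ∀ ω, 0 ≤ S ω) (j : ℕ) :
    IsStoppingTime (gridFiltration ℱ j) (fun ω => ((gridIdx j (S ω) : ℕ) : WithTop ℕ)) := by
  intro k
  have : {ω | ((gridIdx j (S ω) : ℕ) : WithTop ℕ) ≤ (k : WithTop ℕ)} =
      {ω | S ω < (k : ℝ) / ((j : ℝ) + 1)} := by
    ext ω
    simp only [mem_ofPred_eq]
    rw [← gridIdx_le_iff (h0 ω)]
    exact WithTop.coe_le_coe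
  exact this ▸ hS _

theorem RightCont.measurable_at {Y : ℝ → Ω → ℝ} (hY : RightCont Y) (hm : ∀ t, Measurable (Y t))
    {S : Ω → ℝ} (hS : Measurable S) : Measurable (fun ω => Y (S ω) ω) :=
  (RightCont.measurable_uncurry hY hm).comp (hS.prodMk measurable_id)

/-- Optional sampling for bounded right-continuous supermartingales and bounded optional times,
by discretisation of both times. -/
theorem optional_sampling [IsProbabilityMeasure μ] {Y : ℝ → Ω → ℝ} (hY : Supermartingale Y ℱ μ)
    (hrc : RightCont Y) {C : ℝ} (hb : ∀ t ω, |Y t ω| ≤ C) {S R : Ω → ℝ}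
    (hS : IsOptional ℱ S) (hR : IsOptional ℱ R) (h0 : ∀ ω, 0 ≤ S ω) (hSR : ∀ ω, S ω ≤ R ω)
    {K : ℝ} (hRK : ∀ ω, R ω ≤ K) :
    ∫ ω, Y (R ω) ω ∂μ ≤ ∫ ω, Y (S ω) ω ∂μ := by
  have hm : ∀ t, Measurable (Y t) := fun t => ((hY.stronglyMeasurable t).mono (ℱ.le t)).measurable
  have h0R : ∀ ω, 0 ≤ R ω := fun ω => (h0 ω).trans (hSR ω)
  have hlim : ∀ T : Ω → ℝ, IsOptional ℱ T → (∀ ω, 0 ≤ T ω) →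
      Tendsto (fun j : ℕ => ∫ ω, Y ((gridIdx j (T ω) : ℝ) / ((j : ℝ) + 1)) ω ∂μ) atTop
        (𝓝 (∫ ω, Y (T ω) ω ∂μ)) := by
    intro T hT hT0
    refine tendsto_integral_of_dominated_convergence (fun _ => C) (fun j => ?_)
      (integrable_const C) (fun j => Eventually.of_forall fun ω => hb _ _)
      (Eventually.of_forall fun ω => ?_)
    · refine (RightCont.measurable_at hrc hm ?_).aestronglyMeasurable
      have h1 : Measurable (fun ω => gridIdx j (T ω)) :=
        (Nat.measurable_floor.comp (hT.measurable.const_mul _)).add_const 1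
      exact (measurable_from_nat.comp h1 : Measurable fun ω => ((gridIdx j (T ω) : ℕ) : ℝ)).div_const _
    · exact RightCont.tendsto_seq hrc ω (fun j => le_grid (hT0 ω)) (fun j => grid_le (hT0 ω))
  refine le_of_tendsto_of_tendsto' (hlim R hR h0R) (hlim S hS h0) fun j => ?_
  have hsub : Submartingale (fun k : ℕ => -Y ((k : ℝ) / ((j : ℝ) + 1))) (gridFiltration ℱ j) μ := by
    refine ⟨fun k => (hY.stronglyMeasurable _).neg, fun k l hkl => ?_, fun k => (hY.integrable _).neg⟩
    exact hY.neg.ae_le_condExp (by gcongr)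
  have h := hsub.expected_stoppedValue_mono (isStoppingTime_grid hS h0 j)
    (isStoppingTime_grid hR h0R j) (N := gridIdx j K)
    (fun ω => WithTop.coe_le_coe.2 (gridIdx_mono j (hSR ω)))
    (fun ω => WithTop.coe_le_coe.2 (gridIdx_mono j (hRK ω)))
  have e : ∀ T : Ω → ℝ, ∫ ω, stoppedValue (fun k : ℕ => -Y ((k : ℝ) / ((j : ℝ) + 1)))
      (fun ω => ((gridIdx j (T ω) : ℕ) : WithTop ℕ)) ω ∂μ =
      - ∫ ω, Y ((gridIdx j (T ω) : ℝ) / ((j : ℝ) + 1)) ω ∂μ := by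
    intro T
    rw [← integral_neg]
    rfl
  rw [e, e] at h
  linarith

end Sampling


/-! ### Increasing sequences of right-continuous supermartingales -/

/-- A pointwise increasing sequence of right-continuous supermartingales with values in
`[0, C]`. -/
structure IncreasingSystem {Ω : Type*} {m0 : MeasurableSpace Ω} (ℱ : Filtration ℝ m0)
    (μ : Measure Ω) (Z : ℕ → ℝ → Ω → ℝ) (C : ℝ) : Prop where
  rightCont : ∀ n, RightCont (Z n)
  mono : ∀ t ω, Monotone fun n => Z n t ω
  nonneg : ∀ n t ω, 0 ≤ Z n t ω
  le_bound : ∀ n t ω, Z n t ω ≤ C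
  supermartingale : ∀ n, Supermartingale (Z n) ℱ μ

/-- The pointwise limit `sup_n Z n` of the sequence. -/
noncomputable def supProc {Ω : Type*} (Z : ℕ → ℝ → Ω → ℝ) (t : ℝ) (ω : Ω) : ℝ := ⨆ n, Z n t ω

namespace IncreasingSystem

variable {Ω : Type*} {m0 : MeasurableSpace Ω} {μ : Measure Ω} {ℱ : Filtration ℝ m0}
  {Z : ℕ → ℝ → Ω → ℝ} {C : ℝ}

theorem bddAbove (hZ : IncreasingSystem ℱ μ Z C) (t : ℝ) (ω : Ω) :
    BddAbove (Set.range fun n => Z n t ω) :=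
  ⟨C, by rintro _ ⟨n, rfl⟩; exact hZ.le_bound n t ω⟩

theorem le_sup (hZ : IncreasingSystem ℱ μ Z C) (n : ℕ) (t : ℝ) (ω : Ω) :
    Z n t ω ≤ supProc Z t ω := le_ciSup (hZ.bddAbove t ω) n

theorem lt_sup_iff (hZ : IncreasingSystem ℱ μ Z C) {t : ℝ} {ω : Ω} {c : ℝ} :
    c < supProc Z t ω ↔ ∃ n, c < Z n t ω := lt_ciSup_iff (hZ.bddAbove t ω)

theorem sup_nonneg (hZ : IncreasingSystem ℱ μ Z C) (t : ℝ) (ω : Ω) : 0 ≤ supProc Z t ω :=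
  (hZ.nonneg 0 t ω).trans (hZ.le_sup 0 t ω)

theorem sup_le (hZ : IncreasingSystem ℱ μ Z C) (t : ℝ) (ω : Ω) : supProc Z t ω ≤ C :=
  ciSup_le fun n => hZ.le_bound n t ω

theorem tendsto_sup (hZ : IncreasingSystem ℱ μ Z C) (t : ℝ) (ω : Ω) :
    Tendsto (fun n => Z n t ω) atTop (𝓝 (supProc Z t ω)) :=
  tendsto_atTop_ciSup (hZ.mono t ω) (hZ.bddAbove t ω)

theorem measurable (hZ : IncreasingSystem ℱ μ Z C) (n : ℕ) (t : ℝ) : Measurable[ℱ t] (Z n t) :=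
  ((hZ.supermartingale n).stronglyMeasurable t).measurable

theorem measurable' (hZ : IncreasingSystem ℱ μ Z C) (n : ℕ) (t : ℝ) : Measurable (Z n t) :=
  (hZ.measurable n t).mono (ℱ.le t) le_rfl

theorem sup_measurable (hZ : IncreasingSystem ℱ μ Z C) (t : ℝ) :
    Measurable[ℱ t] (supProc Z t) :=
  Measurable.iSup fun n => hZ.measurable n t

theorem eventually_gt (hZ : IncreasingSystem ℱ μ Z C) {n : ℕ} {t : ℝ} {ω : Ω} {c : ℝ}
    (h : c < Z n t ω) : ∀ᶠ r in 𝓝[≥] t, c < Z n r ω :=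
  (hZ.rightCont n ω t).eventually (lt_mem_nhds h)

/-- The limit is lower semicontinuous from the right, as a supremum of right-continuous paths. -/
theorem eventually_gt_sup (hZ : IncreasingSystem ℱ μ Z C) {t : ℝ} {ω : Ω} {c : ℝ}
    (h : c < supProc Z t ω) : ∀ᶠ r in 𝓝[≥] t, c < supProc Z r ω := by
  obtain ⟨n, hn⟩ := hZ.lt_sup_iff.1 h
  exact (hZ.eventually_gt hn).mono fun r hr => hr.trans_le (hZ.le_sup n r ω)

theorem sup_measurable_at (hZ : IncreasingSystem ℱ μ Z C) {S : Ω → ℝ} (hS : Measurable S) :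
    Measurable (fun ω => supProc Z (S ω) ω) :=
  Measurable.iSup fun n => RightCont.measurable_at (hZ.rightCont n) (hZ.measurable' n) hS

/-- At a bounded optional time `S` the limit has no upward right-oscillation almost surely.
If the limit exceeded `b` immediately after `S`, then sampling `Z n` when it first exceeds `b`
within time `h` of `S` would give, as `n → ∞` and `h → 0`, values of at least `b`, and of at least
the limit at `S` in any case; the expectations of these values are at most that of the limit
at `S`, by optional sampling. -/
theorem ae_eventually_le (hZ : IncreasingSystem ℱ μ Z C) [IsProbabilityMeasure μ] {S : Ω → ℝ}
    (hS : IsOptional ℱ S) (h0 : ∀ ω, 0 ≤ S ω) {K : ℝ} (hK : ∀ ω, S ω ≤ K) (b : ℝ) :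
    ∀ᵐ ω ∂μ, supProc Z (S ω) ω < b → ∀ᶠ r in 𝓝[>] (S ω), supProc Z r ω ≤ b := by
  let R : ℕ → ℕ → Ω → ℝ := fun k n ω =>
    min (hit S (fun t ω => b < Z n t ω) (K + 1) ω) (S ω + 1 / ((k : ℝ) + 1))
  have hpos : ∀ k : ℕ, 0 < 1 / ((k : ℝ) + 1) := fun k => by positivity
  have hRopt : ∀ k n, IsOptional ℱ (R k n) := fun k n =>
    (isOptional_hit hS (K + 1)
      (fun t => measurableSet_lt measurable_const (hZ.measurable n t))
      (fun t ω h => (hZ.eventually_gt h).filter_mono (nhdsWithin_mono _ Ioi_subset_Ici_self))).min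
    (hS.add_const (hpos k).le)
  have hSR : ∀ k n ω, S ω ≤ R k n ω := fun k n ω =>
    le_min (le_hit (by linarith [hK ω]) fun _ ht _ => ht.le) (by linarith [hpos k])
  have hRle : ∀ k n ω, R k n ω ≤ S ω + 1 / ((k : ℝ) + 1) := fun k n ω => min_le_right _ _
  have hRK : ∀ k n ω, R k n ω ≤ K + 1 := fun k n ω => (min_le_left _ _).trans (hit_le _ _ _ _)
  have hVm : Measurable (fun ω => supProc Z (S ω) ω) := hZ.sup_measurable_at hS.measurable
  have habs : ∀ n t ω, |Z n t ω| ≤ C := fun n t ω => by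
    rw [abs_of_nonneg (hZ.nonneg n t ω)]; exact hZ.le_bound n t ω
  have hfm : ∀ k n, Measurable (fun ω => Z n (R k n ω) ω) := fun k n =>
    RightCont.measurable_at (hZ.rightCont n) (hZ.measurable' n) (hRopt k n).measurable
  have hint : ∀ {f : Ω → ℝ}, Measurable f → (∀ ω, 0 ≤ f ω) → (∀ ω, f ω ≤ C) → Integrable f μ := by
    intro f hf h1 h2
    refine Integrable.of_bound hf.aestronglyMeasurable C (Eventually.of_forall fun ω => ?_)
    rw [Real.norm_of_nonneg (h1 ω)]; exact h2 ω
  set I : ℝ≥0∞ := ∫⁻ ω, ENNReal.ofReal (supProc Z (S ω) ω) ∂μ with hI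
  let f : ℕ → ℕ → Ω → ℝ≥0∞ := fun k n ω => ENNReal.ofReal (Z n (R k n ω) ω)
  have hfle : ∀ k n, ∫⁻ ω, f k n ω ∂μ ≤ I := by
    intro k n
    rw [hI, ← ofReal_integral_eq_lintegral_ofReal
        (hint (hfm k n) (fun ω => hZ.nonneg _ _ _) (fun ω => hZ.le_bound _ _ _))
        (Eventually.of_forall fun ω => hZ.nonneg _ _ _),
      ← ofReal_integral_eq_lintegral_ofReal
        (hint hVm (fun ω => hZ.sup_nonneg _ _) (fun ω => hZ.sup_le _ _))
        (Eventually.of_forall fun ω => hZ.sup_nonneg _ _)]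
    refine ENNReal.ofReal_le_ofReal ((optional_sampling (hZ.supermartingale n) (hZ.rightCont n)
      (habs n) hS (hRopt k n) h0 (hSR k n) (hRK k n)).trans ?_)
    exact integral_mono
      (hint (RightCont.measurable_at (hZ.rightCont n) (hZ.measurable' n) hS.measurable)
        (fun ω => hZ.nonneg _ _ _) (fun ω => hZ.le_bound _ _ _))
      (hint hVm (fun ω => hZ.sup_nonneg _ _) (fun ω => hZ.sup_le _ _))
      (fun ω => hZ.le_sup _ _ _)
  -- Two applications of the lemma of Fatou, in `n` and then in the window length `1 / (k + 1)`.
  let G : ℕ → Ω → ℝ≥0∞ := fun k ω => liminf (fun n => f k n ω) atTop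
  have hGm : ∀ k, Measurable (G k) := fun k => Measurable.liminf fun n => (hfm k n).ennreal_ofReal
  have hGle : ∀ k, ∫⁻ ω, G k ω ∂μ ≤ I := fun k =>
    (lintegral_liminf_le fun n => (hfm k n).ennreal_ofReal).trans
      (liminf_le_of_le (by isBoundedDefault) fun c hc => by
        obtain ⟨n, hn⟩ := hc.exists
        exact hn.trans (hfle k n))
  let H : Ω → ℝ≥0∞ := fun ω => liminf (fun k => G k ω) atTop
  have hHm : Measurable H := Measurable.liminf hGm
  have hHle : ∫⁻ ω, H ω ∂μ ≤ I :=
    (lintegral_liminf_le hGm).trans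
      (liminf_le_of_le (by isBoundedDefault) fun c hc => by
        obtain ⟨n, hn⟩ := hc.exists
        exact hn.trans (hGle n))
  -- Hence `H` equals the limit at `S` almost surely; but `H ≥ b` where the limit exceeds `b`
  -- immediately after `S`.
  have hHge : ∀ ω, ENNReal.ofReal (supProc Z (S ω) ω) ≤ H ω := by
    intro ω
    refine le_of_forall_lt_imp_le_of_dense fun d hd => ?_
    have hd' : d ≠ ⊤ := (hd.trans ENNReal.ofReal_lt_top).ne
    rw [← ENNReal.ofReal_toReal hd'] at hd ⊢
    have hd2 : d.toReal < supProc Z (S ω) ω := (ENNReal.ofReal_lt_ofReal_iff_of_nonneg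
      ENNReal.toReal_nonneg).1 hd
    obtain ⟨m, hm⟩ := hZ.lt_sup_iff.1 hd2
    obtain ⟨u, hu, hu2⟩ := mem_nhdsGE_iff_exists_Ico_subset.1 (hZ.eventually_gt hm)
    have hu' : 0 < u - S ω := sub_pos.2 hu
    obtain ⟨k0, hk0⟩ := exists_nat_one_div_lt hu'
    refine le_liminf_of_le (by isBoundedDefault) ?_
    filter_upwards [eventually_ge_atTop k0] with k hk
    refine le_liminf_of_le (by isBoundedDefault) ?_
    filter_upwards [eventually_ge_atTop m] with n hn
    refine ENNReal.ofReal_le_ofReal ?_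
    have h1 : 1 / ((k : ℝ) + 1) ≤ 1 / ((k0 : ℝ) + 1) := by gcongr
    have h2 : R k n ω ∈ Ico (S ω) u := ⟨hSR k n ω, by linarith [hRle k n ω]⟩
    exact (hu2 h2).le.trans (hZ.mono _ _ hn)
  have hIfin : I ≠ ⊤ := by
    rw [hI, ← ofReal_integral_eq_lintegral_ofReal
        (hint hVm (fun ω => hZ.sup_nonneg _ _) (fun ω => hZ.sup_le _ _))
        (Eventually.of_forall fun ω => hZ.sup_nonneg _ _)]
    exact ENNReal.ofReal_ne_top
  have hEq := ae_eq_of_ae_le_of_lintegral_le (Eventually.of_forall hHge) hIfin hHm.aemeasurable hHle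
  filter_upwards [hEq] with ω hω hlt
  by_contra hcon
  have hfreq : ∃ᶠ r in 𝓝[>] (S ω), b < supProc Z r ω := by
    simpa [Filter.not_eventually] using hcon
  have hb : ENNReal.ofReal b ≤ H ω := by
    refine le_liminf_of_le (by isBoundedDefault) (Eventually.of_forall fun k => ?_)
    have hk : S ω < min (K + 1) (S ω + 1 / ((k : ℝ) + 1)) :=
      lt_min (by linarith [hK ω]) (by linarith [hpos k])
    obtain ⟨r, hr1, hr2, hr3⟩ := (hfreq.and_eventually (Ioo_mem_nhdsGT hk)).exists
    obtain ⟨m, hm⟩ := hZ.lt_sup_iff.1 hr1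
    refine le_liminf_of_le (by isBoundedDefault) ?_
    filter_upwards [eventually_ge_atTop m] with n hn
    refine ENNReal.ofReal_le_ofReal ?_
    have hbn : b < Z n r ω := hm.trans_le (hZ.mono _ _ hn)
    have hhit : hit S (fun t ω => b < Z n t ω) (K + 1) ω ≤ r := hit_le_of_mem hr2 hbn
    have hReq : R k n ω = hit S (fun t ω => b < Z n t ω) (K + 1) ω :=
      min_eq_left (hhit.trans (hr3.le.trans (min_le_right _ _)))
    -- At the hitting time itself `Z n ≥ b`, by right-continuity.
    by_contra hlt'
    rw [not_le] at hlt'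
    have hev := (hZ.rightCont n ω (R k n ω)).eventually (gt_mem_nhds hlt')
    obtain ⟨u, hu, hu2⟩ := mem_nhdsGE_iff_exists_Ico_subset.1 hev
    have hK1 : hit S (fun t ω => b < Z n t ω) (K + 1) ω < min u (K + 1) :=
      lt_min (hReq ▸ hu) (hhit.trans_lt (hr3.trans_le (min_le_left _ _)))
    rcases hit_lt_iff.1 hK1 with h | ⟨t, ht1, ht2, ht3⟩
    · exact absurd h (not_lt.2 (min_le_right _ _))
    · have h4 : t ∈ Ico (R k n ω) u :=
        ⟨hReq ▸ hit_le_of_mem ht1 ht2, ht3.trans_le (min_le_left _ _)⟩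
      exact absurd ht2 (not_lt.2 (le_of_lt (hu2 h4)))
  rw [← hω] at hb
  exact absurd ((ENNReal.ofReal_le_ofReal_iff (hZ.sup_nonneg _ _)).1 hb) (not_le.2 hlt)


/-! ### A right-continuous version of the limit -/

/-- Optional times `S` with values in `[0, K]` before which the limit of the sequence `Z`
surely has no upward right-oscillation larger than `ε`. -/
structure Admissible (ℱ : Filtration ℝ m0) (Z : ℕ → ℝ → Ω → ℝ) (ε K : ℝ) (S : Ω → ℝ) :
    Prop where
  isOptional : IsOptional ℱ S
  nonneg : ∀ ω, 0 ≤ S ω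
  le_horizon : ∀ ω, S ω ≤ K
  no_jump : ∀ ω t, 0 ≤ t → t < S ω → ∀ᶠ r in 𝓝[>] t, supProc Z r ω ≤ supProc Z t ω + ε

/-- A time until which, after `S`, the limit stays within `[a, b]`. It is built from the
hitting times of `Z n < a`, rather than of `supProc Z < a`, because only the former are
hitting times of right-open sets. -/
noncomputable def extend (Z : ℕ → ℝ → Ω → ℝ) (K : ℝ) (S : Ω → ℝ) (a b : ℝ) (ω : Ω) : ℝ :=
  min (⨆ n, hit S (fun t ω => Z n t ω < a) K ω) (hit S (fun t ω => b < supProc Z t ω) K ω)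

theorem bddAbove_hit (S : Ω → ℝ) (A : ℕ → ℝ → Ω → Prop) (K : ℝ) (ω : Ω) :
    BddAbove (Set.range fun n => hit S (A n) K ω) :=
  ⟨K, by rintro _ ⟨n, rfl⟩; exact hit_le _ _ _ _⟩

theorem le_extend {ε K : ℝ} {S : Ω → ℝ} (hS : Admissible ℱ Z ε K S) (a b : ℝ) (ω : Ω) :
    S ω ≤ extend Z K S a b ω :=
  le_min ((le_hit (hS.le_horizon ω) fun _ ht _ => ht.le).trans (le_ciSup (bddAbove_hit S _ K ω) 0))
    (le_hit (hS.le_horizon ω) fun _ ht _ => ht.le)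

theorem admissible_extend (hZ : IncreasingSystem ℱ μ Z C) {ε K : ℝ} {S : Ω → ℝ}
    (hS : Admissible ℱ Z ε K S) (a : ℝ) : Admissible ℱ Z ε K (extend Z K S a (a + ε)) := by
  refine ⟨?_, fun ω => (hS.nonneg ω).trans (le_extend hS _ _ ω),
    fun ω => (min_le_right _ _).trans (hit_le _ _ _ _), ?_⟩
  · refine IsOptional.min (IsOptional.iSup (fun n => isOptional_hit hS.isOptional K
      (fun t => measurableSet_lt (hZ.measurable n t) measurable_const) fun t ω h => ?_)
      (fun n ω => hit_le _ _ _ _)) (isOptional_hit hS.isOptional K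
      (fun t => measurableSet_lt measurable_const (hZ.sup_measurable t)) fun t ω h => ?_)
    · exact ((hZ.rightCont n ω t).eventually (gt_mem_nhds h)).filter_mono
        (nhdsWithin_mono _ Ioi_subset_Ici_self)
    · exact (hZ.eventually_gt_sup h).filter_mono (nhdsWithin_mono _ Ioi_subset_Ici_self)
  · intro ω t ht0 ht
    rcases lt_or_ge t (S ω) with htS | htS
    · exact hS.no_jump ω t ht0 htS
    · obtain ⟨ht1, ht2⟩ := lt_min_iff.1 ht
      obtain ⟨n, hn⟩ := (lt_ciSup_iff (bddAbove_hit S _ K ω)).1 ht1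
      -- `Z n ≥ a` on an interval to the right of `t`, hence also at `t`.
      have hZa : a ≤ Z n t ω := by
        by_contra hlt
        rw [not_le] at hlt
        have h1 := ((hZ.rightCont n ω t).eventually (gt_mem_nhds hlt)).filter_mono
          (nhdsWithin_mono _ Ioi_subset_Ici_self)
        obtain ⟨r, hr1, hr2⟩ := (h1.and (Ioo_mem_nhdsGT hn)).exists
        exact absurd (hit_le_of_mem (K := K) (A := fun t ω => Z n t ω < a)
          (htS.trans_lt hr2.1) hr1) (not_le.2 hr2.2)
      filter_upwards [Ioo_mem_nhdsGT ht2] with r hr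
      have hrb : supProc Z r ω ≤ a + ε := by
        by_contra hlt
        rw [not_le] at hlt
        exact absurd (hit_le_of_mem (K := K) (A := fun t ω => a + ε < supProc Z t ω)
          (htS.trans_lt hr.1) hlt) (not_le.2 hr.2)
      linarith [hZ.le_sup n t ω]

theorem lt_extend (hZ : IncreasingSystem ℱ μ Z C) {K : ℝ} {S : Ω → ℝ} {a b : ℝ} {ω : Ω}
    (hK : S ω < K) (ha : a < supProc Z (S ω) ω)
    (hb : ∀ᶠ r in 𝓝[>] (S ω), supProc Z r ω ≤ b) : S ω < extend Z K S a b ω := by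
  have key : ∀ {A : ℝ → Ω → Prop}, (∀ᶠ r in 𝓝[>] (S ω), ¬ A r ω) → S ω < hit S A K ω := by
    intro A hA
    obtain ⟨u, hu, hu2⟩ := mem_nhdsGT_iff_exists_Ioo_subset.1 hA
    refine (lt_min hK (mem_Ioi.1 hu)).trans_le (le_hit (min_le_left _ u) fun t ht1 ht2 => ?_)
    by_contra hlt
    rw [not_le] at hlt
    exact hu2 ⟨ht1, hlt.trans_le (min_le_right _ _)⟩ ht2
  refine lt_min ?_ (key (hb.mono fun r hr => not_lt.2 hr))
  obtain ⟨n, hn⟩ := hZ.lt_sup_iff.1 ha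
  refine (key ?_).trans_le (le_ciSup (bddAbove_hit S _ K ω) n)
  exact ((hZ.eventually_gt hn).filter_mono (nhdsWithin_mono _ Ioi_subset_Ici_self)).mono
    fun r hr => not_lt.2 hr.le

/-- Some admissible time reaches the horizon almost surely: an admissible time of maximal
expectation does, since otherwise one of its extensions would have larger expectation. -/
theorem exists_admissible (hZ : IncreasingSystem ℱ μ Z C) [IsProbabilityMeasure μ] {ε K : ℝ}
    (hε : 0 < ε) (hK : 0 ≤ K) : ∃ S, Admissible ℱ Z ε K S ∧ ∀ᵐ ω ∂μ, S ω = K := by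
  have hint : ∀ {S}, Admissible ℱ Z ε K S → Integrable S μ := fun {S} hS =>
    Integrable.of_bound hS.isOptional.measurable.aestronglyMeasurable K
      (Eventually.of_forall fun ω => by
        rw [Real.norm_of_nonneg (hS.nonneg ω)]; exact hS.le_horizon ω)
  let E : Set ℝ := {x | ∃ S, Admissible ℱ Z ε K S ∧ ∫ ω, S ω ∂μ = x}
  have hEne : E.Nonempty := ⟨_, fun _ => 0, ⟨isOptional_const 0, fun _ => le_rfl, fun _ => hK,
    fun ω t h0 h1 => absurd h1 (not_lt.2 h0)⟩, rfl⟩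
  have hEb : BddAbove E := by
    refine ⟨K, ?_⟩
    rintro _ ⟨S, hS, rfl⟩
    calc ∫ ω, S ω ∂μ ≤ ∫ ω, K ∂μ := integral_mono (hint hS) (integrable_const K) hS.le_horizon
      _ = K := by simp
  obtain ⟨u, -, hu, huE⟩ := exists_seq_tendsto_sSup hEne hEb
  choose S hS hSu using huE
  have hbdd : ∀ ω, BddAbove (Set.range fun n => S n ω) := fun ω =>
    ⟨K, by rintro _ ⟨n, rfl⟩; exact (hS n).le_horizon ω⟩
  let T : Ω → ℝ := fun ω => ⨆ n, S n ω
  have hT : Admissible ℱ Z ε K T := by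
    refine ⟨IsOptional.iSup (fun n => (hS n).isOptional) (fun n => (hS n).le_horizon),
      fun ω => ((hS 0).nonneg ω).trans (le_ciSup (hbdd ω) 0),
      fun ω => ciSup_le fun n => (hS n).le_horizon ω, fun ω t ht0 ht => ?_⟩
    obtain ⟨n, hn⟩ := (lt_ciSup_iff (hbdd ω)).1 ht
    exact (hS n).no_jump ω t ht0 hn
  have hTmax : ∀ {R}, Admissible ℱ Z ε K R → ∫ ω, R ω ∂μ ≤ ∫ ω, T ω ∂μ := by
    intro R hR
    refine (le_csSup hEb ⟨R, hR, rfl⟩).trans (le_of_tendsto' hu fun n => ?_)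
    rw [← hSu n]
    exact integral_mono (hint (hS n)) (hint hT) fun ω => le_ciSup (hbdd ω) n
  refine ⟨T, hT, ?_⟩
  have h1 : ∀ᵐ ω ∂μ, ∀ a : ℚ, extend Z K T a (a + ε) ω = T ω := by
    refine ae_all_iff.2 fun a => ?_
    have hadm := admissible_extend hZ hT (a : ℝ)
    have hle : T ≤ᵐ[μ] extend Z K T a (a + ε) := Eventually.of_forall (le_extend hT _ _)
    have heq := (integral_eq_iff_of_ae_le (hint hT) (hint hadm) hle).1
      (le_antisymm (integral_mono_ae (hint hT) (hint hadm) hle) (hTmax hadm))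
    exact heq.mono fun ω h => h.symm
  have h2 : ∀ᵐ ω ∂μ, ∀ a : ℚ, supProc Z (T ω) ω < a + ε →
      ∀ᶠ r in 𝓝[>] (T ω), supProc Z r ω ≤ a + ε :=
    ae_all_iff.2 fun a => hZ.ae_eventually_le hT.isOptional hT.nonneg hT.le_horizon _
  filter_upwards [h1, h2] with ω hω1 hω2
  by_contra hne
  have hlt : T ω < K := lt_of_le_of_ne (hT.le_horizon ω) hne
  obtain ⟨a, ha1, ha2⟩ := exists_rat_btwn (show supProc Z (T ω) ω - ε < supProc Z (T ω) ω by linarith)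
  exact absurd (hω1 a) (lt_extend hZ hlt ha2 (hω2 a (by linarith))).ne'

/-- The limit of an increasing sequence of bounded right-continuous supermartingales has a
right-continuous adapted version, without completeness or right-continuity of the filtration: it is
the limit frozen at an optional time that is almost surely never reached. The condition `hneg`
settles right-continuity at negative times, so that only times in `[0, ∞)` need attention. -/
theorem exists_version (hZ : IncreasingSystem ℱ μ Z C) [IsProbabilityMeasure μ]
    (hneg : ∀ n t ω, t < 0 → Z n t ω = C) :
    ∃ W : ℝ → Ω → ℝ, Supermartingale W ℱ μ ∧ RightCont W ∧ (∀ t ω, 0 ≤ W t ω) ∧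
      ∀ᵐ ω ∂μ, ∀ t, W t ω = supProc Z t ω := by
  have hex : ∀ k K : ℕ, ∃ S, Admissible ℱ Z (1 / ((k : ℝ) + 1)) (K : ℝ) S ∧
      ∀ᵐ ω ∂μ, S ω = K := fun k K => hZ.exists_admissible (by positivity) (by positivity)
  choose S hS hSK using hex
  -- The times, for each of the countably many pairs of a tolerance and a horizon, at which
  -- right-continuity may have failed; there are none almost surely.
  let B : Ω → Set ℝ := fun ω => {x | ∃ k K : ℕ, S k K ω = x ∧ x < K}
  have hB0 : ∀ ω, ∀ x ∈ B ω, 0 ≤ x := by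
    rintro ω x ⟨k, K, rfl, -⟩
    exact (hS k K).nonneg ω
  have hBb : ∀ ω, BddBelow (B ω) := fun ω => ⟨0, hB0 ω⟩
  -- `ρ t` is the minimum of `t` and the first such time.
  let ρ : ℝ → Ω → ℝ := fun t ω => sInf (insert t (B ω))
  have hρle : ∀ t ω, ρ t ω ≤ t := fun t ω => csInf_le ((hBb ω).insert t) (mem_insert _ _)
  have hρm : ∀ t, Measurable[ℱ t] (ρ t) := by
    intro t
    refine measurable_of_Iio fun c => ?_
    have hset : ρ t ⁻¹' Iio c = {_ω | t < c} ∪ ⋃ k : ℕ, ⋃ K : ℕ, {ω | S k K ω < min c K} := by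
      ext ω
      simp only [mem_preimage, mem_Iio, mem_union, mem_iUnion, mem_ofPred_eq, ρ]
      rw [csInf_lt_iff ((hBb ω).insert t) (insert_nonempty _ _)]
      constructor
      · rintro ⟨x, rfl | ⟨k, K, rfl, hx⟩, hxc⟩
        · exact Or.inl hxc
        · exact Or.inr ⟨k, K, lt_min hxc hx⟩
      · rintro (h | ⟨k, K, h⟩)
        · exact ⟨t, mem_insert _ _, h⟩
        · exact ⟨S k K ω, mem_insert_of_mem _ ⟨k, K, rfl, (lt_min_iff.1 h).2⟩, (lt_min_iff.1 h).1⟩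
    rw [hset]
    by_cases htc : t < c
    · simp [htc]
    · refine MeasurableSet.union (by simp [htc]) ?_
      exact MeasurableSet.iUnion fun k => MeasurableSet.iUnion fun K =>
        ℱ.mono ((min_le_left _ _).trans (not_lt.1 htc)) _ ((hS k K).isOptional _)
  have hae : ∀ᵐ ω ∂μ, ∀ t, supProc Z (ρ t ω) ω = supProc Z t ω := by
    filter_upwards [ae_all_iff.2 fun k => ae_all_iff.2 (hSK k)] with ω hω t
    have hBe : B ω = ∅ := by
      ext x
      simp only [mem_empty_iff_false, iff_false]
      rintro ⟨k, K, rfl, h⟩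
      exact absurd (hω k K) h.ne
    simp [ρ, hBe]
  have hWm : ∀ t, Measurable[ℱ t] (fun ω => supProc Z (ρ t ω) ω) := by
    intro t
    refine Measurable.iSup fun n => ?_
    have h := @RightCont.measurable_sample _ (ℱ t) _ (hZ.rightCont n) t
      (fun r hr => (hZ.measurable n r).mono (ℱ.mono hr) le_rfl) _ (hρm t)
    simpa only [min_eq_left (hρle t _)] using h
  refine ⟨fun t ω => supProc Z (ρ t ω) ω, ?_, ?_, fun t ω => hZ.sup_nonneg _ _, hae⟩
  · have hbd : ∀ t, Integrable (fun ω => supProc Z (ρ t ω) ω) μ := fun t =>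
      Integrable.of_bound ((hWm t).mono (ℱ.le t) le_rfl).aestronglyMeasurable C
        (Eventually.of_forall fun ω => by
          rw [Real.norm_of_nonneg (hZ.sup_nonneg _ _)]; exact hZ.sup_le _ _)
    have hlim : ∀ t (A : Set Ω), Tendsto (fun n => ∫ ω in A, Z n t ω ∂μ) atTop
        (𝓝 (∫ ω in A, supProc Z (ρ t ω) ω ∂μ)) := by
      intro t A
      refine tendsto_integral_of_dominated_convergence (fun _ => C)
        (fun n => (hZ.measurable' n t).aestronglyMeasurable) (integrable_const C)
        (fun n => Eventually.of_forall fun ω => ?_) ?_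
      · rw [Real.norm_of_nonneg (hZ.nonneg _ _ _)]; exact hZ.le_bound _ _ _
      · filter_upwards [ae_restrict_of_ae hae] with ω hω
        rw [hω t]
        exact hZ.tendsto_sup t ω
    have hsub : Submartingale (fun t ω => -supProc Z (ρ t ω) ω) ℱ μ := by
      refine submartingale_of_setIntegral_le (fun t => ((hWm t).neg).stronglyMeasurable)
        (fun t => (hbd t).neg) fun s t hst A hA => ?_
      rw [integral_neg, integral_neg, neg_le_neg_iff]
      exact le_of_tendsto_of_tendsto' (hlim t A) (hlim s A)
        fun n => (hZ.supermartingale n).setIntegral_le hst hA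
    have h := hsub.neg
    have e : (-fun (t : ℝ) (ω : Ω) => -supProc Z (ρ t ω) ω) = fun t ω => supProc Z (ρ t ω) ω := by
      ext t ω; simp
    rwa [e] at h
  · intro ω t
    by_cases hcase : (B ω).Nonempty ∧ sInf (B ω) ≤ t
    · -- The path is frozen from time `t` on.
      have hconst : ∀ s, t ≤ s → ρ s ω = sInf (B ω) := fun s hs => by
        simp only [ρ]
        rw [csInf_insert (hBb ω) hcase.1]
        exact inf_eq_right.2 (hcase.2.trans hs)
      refine (continuousWithinAt_const (b := supProc Z (sInf (B ω)) ω)).congr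
        (fun s hs => ?_) ?_
      · simp only [hconst s hs]
      · simp only [hconst t le_rfl]
    · obtain ⟨u, htu, hu⟩ : ∃ u, t < u ∧ ∀ x ∈ B ω, u ≤ x := by
        rcases (B ω).eq_empty_or_nonempty with h | h
        · exact ⟨t + 1, by linarith, by simp [h]⟩
        · exact ⟨sInf (B ω), not_le.1 fun h' => hcase ⟨h, h'⟩, fun x hx => csInf_le (hBb ω) hx⟩
      have hid : ∀ s, s ≤ u → ρ s ω = s := fun s hs => by
        refine le_antisymm (hρle s ω) (le_csInf (insert_nonempty _ _) ?_)
        rintro x (rfl | hx)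
        · exact le_rfl
        · exact hs.trans (hu x hx)
      have hV : ContinuousWithinAt (fun s => supProc Z s ω) (Ici t) t := by
        rcases lt_or_ge t 0 with ht | ht
        · have hc : ∀ s < 0, supProc Z s ω = C := fun s hs => by
            simp [supProc, hneg _ s ω hs]
          refine ContinuousAt.continuousWithinAt ?_
          refine (continuousAt_const (y := C)).congr ?_
          filter_upwards [Iio_mem_nhds ht] with s hs
          exact (hc s hs).symm
        · rw [ContinuousWithinAt, tendsto_order]
          refine ⟨fun c hc => hZ.eventually_gt_sup hc, fun c hc => ?_⟩
          obtain ⟨k, hk⟩ := exists_nat_one_div_lt (sub_pos.2 hc)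
          obtain ⟨K, hK⟩ := exists_nat_gt t
          have htS : t < S k K ω := by
            by_contra hle
            rw [not_lt] at hle
            exact absurd (hu _ ⟨k, K, rfl, hle.trans_lt hK⟩) (not_le.2 (hle.trans_lt htu))
          have hev := (hS k K).no_jump ω t ht htS
          rw [← Ioi_insert, nhdsWithin_insert, eventually_sup, eventually_pure]
          refine ⟨hc, hev.mono fun r hr => ?_⟩
          linarith
      refine hV.congr_of_eventuallyEq ?_ ?_
      · filter_upwards [Ico_mem_nhdsGE htu] with s hs
        simp only [hid s hs.2.le]
      · simp only [hid t htu.le]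

end IncreasingSystem


/-! ### Truncated running maxima of the envelopes -/

/-- An inequality between right-continuous processes holding `dt⊗dP`-almost everywhere holds
almost surely at each fixed time: approximate the time from the right by good times. -/
theorem RightCont.ae_le_of_ae_prod {Ω : Type*} {m0 : MeasurableSpace Ω} {μ : Measure Ω}
    [SFinite μ] {Y Y' : ℝ → Ω → ℝ} (hY : RightCont Y) (hY' : RightCont Y')
    (h : ∀ᵐ p ∂((volume.restrict (Set.Ici (0:ℝ))).prod μ), Y p.1 p.2 ≤ Y' p.1 p.2)
    {t : ℝ} (ht : 0 ≤ t) : ∀ᵐ ω ∂μ, Y t ω ≤ Y' t ω := by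
  have h1 := (ae_restrict_iff' measurableSet_Ici).1 (Measure.ae_ae_of_ae_prod h)
  have h2 : ∀ j : ℕ, ∃ u, t ≤ u ∧ u ≤ t + 1 / ((j : ℝ) + 1) ∧ ∀ᵐ ω ∂μ, Y u ω ≤ Y' u ω := by
    intro j
    have hpos : 0 < 1 / ((j : ℝ) + 1) := by positivity
    have hne : volume (Ioo t (t + 1 / ((j : ℝ) + 1))) ≠ 0 := by
      rw [Real.volume_Ioo]; simpa using by positivity
    have hfr : ∃ᵐ u ∂(volume : Measure ℝ), u ∈ Ioo t (t + 1 / ((j : ℝ) + 1)) :=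
      frequently_ae_mem_iff.2 hne
    obtain ⟨u, hu, hu'⟩ := (hfr.and_eventually h1).exists
    exact ⟨u, hu.1.le, hu.2.le, hu' (ht.trans hu.1.le)⟩
  choose u hu1 hu2 hu3 using h2
  filter_upwards [ae_all_iff.2 hu3] with ω hω
  exact le_of_tendsto_of_tendsto' (hY.tendsto_seq ω hu1 hu2) (hY'.tendsto_seq ω hu1 hu2) hω

theorem RightCont.ae_prod_nonneg {Ω : Type*} {m0 : MeasurableSpace Ω} {μ : Measure Ω}
    [SFinite μ] {Y : ℝ → Ω → ℝ} (hY : RightCont Y) (hm : ∀ t, Measurable (Y t))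
    (h : ∀ t, ∀ᵐ ω ∂μ, 0 ≤ Y t ω) :
    ∀ᵐ p ∂((volume.restrict (Set.Ici (0:ℝ))).prod μ), 0 ≤ Y p.1 p.2 :=
  (Measure.ae_prod_iff_ae_ae (p := fun p : ℝ × Ω => 0 ≤ Y p.1 p.2)
    (measurableSet_le measurable_const (hY.measurable_uncurry hm))).2
    (Eventually.of_forall h)

/-- The running maximum of the processes `Y k`, `k ≤ n`, truncated to `[0, C]`, and set to `C` at
negative times, which do not matter for the envelopes. -/
noncomputable def truncMax {Ω : Type*} (Y : ℕ → ℝ → Ω → ℝ) (C : ℝ) (n : ℕ) (t : ℝ) (ω : Ω) : ℝ :=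
  if t < 0 then C else min C (max 0 (partialSups (fun k => Y k t ω) n))

section TruncMax

variable {Ω : Type*} {m0 : MeasurableSpace Ω} {μ : Measure Ω} {ℱ : Filtration ℝ m0}
  {Y : ℕ → ℝ → Ω → ℝ} {C : ℝ}

theorem truncMax_of_neg {n : ℕ} {t : ℝ} {ω : Ω} (ht : t < 0) : truncMax Y C n t ω = C :=
  if_pos ht

theorem truncMax_of_monotone {n : ℕ} {t : ℝ} {ω : Ω} (ht : 0 ≤ t)
    (hmono : Monotone fun k => Y k t ω) (h0 : 0 ≤ Y n t ω) :
    truncMax Y C n t ω = min C (Y n t ω) := by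
  rw [truncMax, if_neg (not_lt.2 ht), hmono.partialSups_eq, max_eq_right h0]

theorem RightCont.truncMax (hY : ∀ n, RightCont (Y n)) (n : ℕ) : RightCont (truncMax Y C n) := by
  intro ω t
  rcases lt_or_ge t 0 with ht | ht
  · refine ContinuousAt.continuousWithinAt ((continuousAt_const (y := C)).congr ?_)
    filter_upwards [Iio_mem_nhds ht] with s hs
    exact (truncMax_of_neg hs).symm
  · have hp : ∀ n, ContinuousWithinAt (fun s => partialSups (fun k => Y k s ω) n) (Ici t) t := by
      intro n
      induction n with
      | zero => simpa using hY 0 ω t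
      | succ n ih => simpa only [partialSups_add_one] using ih.sup (hY (n + 1) ω t)
    have hc : ContinuousWithinAt (fun s => min C (max 0 (partialSups (fun k => Y k s ω) n)))
        (Ici t) t :=
      continuousWithinAt_const.inf (continuousWithinAt_const.sup (hp n))
    refine hc.congr (fun s hs => ?_) ?_
    · exact if_neg (not_lt.2 (ht.trans hs))
    · exact if_neg (not_lt.2 ht)

theorem measurable_truncMax (hm : ∀ n t, Measurable[ℱ t] (Y n t)) (n : ℕ) (t : ℝ) :
    Measurable[ℱ t] (truncMax Y C n t) := by
  have hp : ∀ n, Measurable[ℱ t] (fun ω => partialSups (fun k => Y k t ω) n) := by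
    intro n
    induction n with
    | zero => simpa using hm 0 t
    | succ n ih =>
      simp only [partialSups_add_one]
      exact ih.sup (hm (n + 1) t)
  rcases lt_or_ge t 0 with ht | ht
  · have e : truncMax Y C n t = fun _ => C := funext fun ω => truncMax_of_neg ht
    rw [e]; exact measurable_const
  · have e : truncMax Y C n t = fun ω => min C (max 0 (partialSups (fun k => Y k t ω) n)) :=
      funext fun ω => if_neg (not_lt.2 ht)
    rw [e]; exact measurable_const.inf (measurable_const.sup (hp n))

/-- Almost surely increasing supermartingales become, after truncation, surely increasing
supermartingales: at each fixed time `t ≥ 0`, `truncMax Y C n t = min C (Y n t)` almost surely. -/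
theorem increasingSystem_truncMax [IsProbabilityMeasure μ] (hC : 0 ≤ C)
    (hY : ∀ n, Supermartingale (Y n) ℱ μ) (hr : ∀ n, RightCont (Y n))
    (h0 : ∀ n t, ∀ᵐ ω ∂μ, 0 ≤ Y n t ω)
    (hmono : ∀ n t, 0 ≤ t → ∀ᵐ ω ∂μ, Y n t ω ≤ Y (n + 1) t ω) :
    IncreasingSystem ℱ μ (truncMax Y C) C := by
  have hnn : ∀ n t ω, 0 ≤ truncMax Y C n t ω := by
    intro n t ω
    rw [truncMax]; split_ifs
    · exact hC
    · exact le_min hC (le_max_left _ _)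
  have hle : ∀ n t ω, truncMax Y C n t ω ≤ C := by
    intro n t ω
    rw [truncMax]; split_ifs
    · exact le_rfl
    · exact min_le_left _ _
  have hm : ∀ n t, Measurable[ℱ t] (truncMax Y C n t) :=
    measurable_truncMax fun n t => ((hY n).stronglyMeasurable t).measurable
  have hint : ∀ n t, Integrable (truncMax Y C n t) μ := fun n t =>
    Integrable.of_bound ((hm n t).mono (ℱ.le t) le_rfl).aestronglyMeasurable C
      (Eventually.of_forall fun ω => by rw [Real.norm_of_nonneg (hnn n t ω)]; exact hle n t ω)
  have hae : ∀ n t, 0 ≤ t → ∀ᵐ ω ∂μ, truncMax Y C n t ω = min C (Y n t ω) := by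
    intro n t ht
    filter_upwards [ae_all_iff.2 fun n => hmono n t ht, h0 n t] with ω h1 h2
    exact truncMax_of_monotone ht (monotone_nat_of_le_succ h1) h2
  refine ⟨RightCont.truncMax hr, ?_, hnn, hle, fun n =>
    ⟨fun t => (hm n t).stronglyMeasurable, fun s t hst => ?_, hint n⟩⟩
  · intro t ω n k hnk
    simp only [truncMax]
    split_ifs
    · exact le_rfl
    · exact min_le_min_left _ (max_le_max_left _ ((partialSups _).monotone hnk))
  · have hbound : μ[truncMax Y C n t | ℱ s] ≤ᵐ[μ] fun _ => C := by
      have h := condExp_mono (m := ℱ s) (hint n t) (integrable_const C)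
        (Eventually.of_forall fun ω => hle n t ω)
      rwa [condExp_const (ℱ.le s)] at h
    rcases lt_or_ge s 0 with hs | hs
    · filter_upwards [hbound] with ω hω
      rwa [truncMax_of_neg hs]
    · have h1 : μ[truncMax Y C n t | ℱ s] ≤ᵐ[μ] μ[Y n t | ℱ s] :=
        condExp_mono (hint n t) ((hY n).integrable t) (by
          filter_upwards [hae n t (hs.trans hst)] with ω hω
          rw [hω]; exact min_le_right _ _)
      filter_upwards [hbound, h1, (hY n).2.1 s t hst, hae n s hs] with ω a b c d
      rw [d]
      exact le_min a (b.trans c)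

end TruncMax

/-! ### Convergence of the envelopes -/

/-- if bounded progressively measurable processes `Xₙ` increase
pointwise to `X`, then their strong envelopes increase, `dt⊗dP`-a.e., to the
strong envelope of `X`. -/
theorem strong_envelope_monotone_convergence
    {Ω : Type*} {m0 : MeasurableSpace Ω} {μ : Measure Ω} [IsProbabilityMeasure μ]
    (ℱ : Filtration ℝ m0) (Xn : ℕ → ℝ → Ω → ℝ) (X : ℝ → Ω → ℝ)
    (hXnprog : ∀ n, ProgMeasurable ℱ (Xn n))
    (hXnbdd : ∀ n, ∃ C, ∀ t ω, |Xn n t ω| ≤ C)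
    (hXnint : ∀ n, Integrable (fun ω => ∫ s in Set.Ioi (0:ℝ), |Xn n s ω|) μ)
    (hXprog : ProgMeasurable ℱ X)
    (hXbdd : ∃ C, ∀ t ω, |X t ω| ≤ C)
    (hXint : Integrable (fun ω => ∫ s in Set.Ioi (0:ℝ), |X s ω|) μ)
    (hmono : ∀ t ω, Monotone fun n => Xn n t ω)
    (hlim : ∀ t ω, Tendsto (fun n => Xn n t ω) atTop (nhds (X t ω)))
    (Un : ℕ → ℝ → Ω → ℝ) (U : ℝ → Ω → ℝ)
    (hUn : ∀ n, IsStrongEnvelope ℱ μ (Xn n) (Un n))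
    (hU : IsStrongEnvelope ℱ μ X U) :
    ∀ᵐ p ∂((volume.restrict (Set.Ici (0:ℝ))).prod μ),
      (Monotone fun n => Un n p.1 p.2) ∧
      Tendsto (fun n => Un n p.1 p.2) atTop (nhds (U p.1 p.2)) := by
  obtain ⟨C₀, hC₀⟩ := hXbdd
  obtain ⟨C, hC, hXC⟩ : ∃ C, 0 ≤ C ∧ ∀ t ω, X t ω ≤ C :=
    ⟨|C₀|, abs_nonneg _, fun t ω => (le_abs_self _).trans ((hC₀ t ω).trans (le_abs_self _))⟩
  have hXle : ∀ n t ω, Xn n t ω ≤ X t ω := fun n t ω => (hmono t ω).ge_of_tendsto (hlim t ω) n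
  have hsucc : ∀ n, ∀ᵐ p ∂((volume.restrict (Set.Ici (0:ℝ))).prod μ),
      Un n p.1 p.2 ≤ Un (n + 1) p.1 p.2 := by
    intro n
    obtain ⟨a1, a2, a3, a4, -⟩ := hUn (n + 1)
    refine (hUn n).2.2.2.2 _ a1 a2 a3 ?_
    filter_upwards [a4] with p hp
    exact (hmono p.1 p.2 n.le_succ).trans hp
  have hUnU : ∀ n, ∀ᵐ p ∂((volume.restrict (Set.Ici (0:ℝ))).prod μ),
      Un n p.1 p.2 ≤ U p.1 p.2 := by
    intro n
    obtain ⟨a1, a2, a3, a4, -⟩ := hU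
    refine (hUn n).2.2.2.2 _ a1 a2 a3 ?_
    filter_upwards [a4] with p hp
    exact (hXle n p.1 p.2).trans hp
  have hUn0 : ∀ n, ∀ᵐ p ∂((volume.restrict (Set.Ici (0:ℝ))).prod μ), 0 ≤ Un n p.1 p.2 :=
    fun n => (hUn n).2.1.ae_prod_nonneg
      (fun t => ((hUn n).1.stronglyMeasurable t).measurable.mono (ℱ.le t) le_rfl) (hUn n).2.2.1
  have hZ : IncreasingSystem ℱ μ (truncMax Un C) C :=
    increasingSystem_truncMax hC (fun n => (hUn n).1) (fun n => (hUn n).2.1)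
      (fun n => (hUn n).2.2.1)
      (fun n t ht => (hUn n).2.1.ae_le_of_ae_prod (hUn (n + 1)).2.1 (hsucc n) ht)
  obtain ⟨W, hW1, hW2, hW3, hW4⟩ := hZ.exists_version fun n t ω => truncMax_of_neg
  have hWV : ∀ᵐ p ∂((volume.restrict (Set.Ici (0:ℝ))).prod μ),
      ∀ t, W t p.2 = supProc (truncMax Un C) t p.2 :=
    Measure.quasiMeasurePreserving_snd.ae hW4
  have hpos : ∀ᵐ p ∂((volume.restrict (Set.Ici (0:ℝ))).prod μ), 0 ≤ p.1 :=
    Measure.quasiMeasurePreserving_fst.ae (ae_restrict_mem measurableSet_Ici)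
  have hUnmono : ∀ᵐ p ∂((volume.restrict (Set.Ici (0:ℝ))).prod μ),
      Monotone fun n => Un n p.1 p.2 := by
    filter_upwards [ae_all_iff.2 hsucc] with p hp
    exact monotone_nat_of_le_succ hp
  -- `W` is a competitor in the definition of the envelope of `X`.
  have hXW : ∀ᵐ p ∂((volume.restrict (Set.Ici (0:ℝ))).prod μ), X p.1 p.2 ≤ W p.1 p.2 := by
    filter_upwards [hWV, hpos, hUnmono, ae_all_iff.2 hUn0, ae_all_iff.2 fun n => (hUn n).2.2.2.1]
      with p h1 h2 h3 h4 h5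
    rw [h1]
    refine le_of_tendsto' (hlim p.1 p.2) fun n => ?_
    refine le_trans ?_ (hZ.le_sup n p.1 p.2)
    rw [truncMax_of_monotone h2 h3 (h4 n)]
    exact le_min ((hXle n _ _).trans (hXC _ _)) (h5 n)
  have hUW := hU.2.2.2.2 W hW1 hW2 (fun t => Eventually.of_forall (hW3 t)) hXW
  filter_upwards [hWV, hpos, hUnmono, ae_all_iff.2 hUn0, ae_all_iff.2 hUnU, hUW]
    with p h1 h2 h3 h4 h5 h6
  refine ⟨h3, tendsto_order.2 ⟨fun c hc => ?_, fun c hc =>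
    Eventually.of_forall fun n => (h5 n).trans_lt hc⟩⟩
  rw [h1] at h6
  obtain ⟨n, hn⟩ := hZ.lt_sup_iff.1 (hc.trans_le h6)
  rw [truncMax_of_monotone h2 h3 (h4 n)] at hn
  filter_upwards [eventually_ge_atTop n] with k hk
  exact (hn.trans_le (min_le_right _ _)).trans_le (h3 hk)
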